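/- (Lemma 1) Let σ_N > 0, σ_S > 0 and set ρ = σ_S²/σ_N². The differential entropy of the output, h_Y := −∫₀^∞ p_Y(y) · log p_Y(y) dy, where p_Y(y) = ∫₀^∞ p_{Y|X}(y|x) p_X(x) dx, is given in closed form by h_Y = log √(σ_S²) − log √(1 + ρ⁻¹) − ρ⁻¹ · log √(1 + ρ) + ρ + ψ(ρ⁻¹) − (3/2)·ψ(1) − log 2 + 1. -/

import Mathlib

open Real MeasureTheory Set Filter

/-- Modified Bessel function of the first kind of order one,
`I₁(z) = ∑_{k=0}^∞ (z/2)^(2k+1) / (k! (k+1)!)`. -/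
noncomputable def besselI1 (z : ℝ) : ℝ :=
  ∑' k : ℕ, (z / 2) ^ (2 * k + 1) / ((Nat.factorial k : ℝ) * (Nat.factorial (k + 1) : ℝ))

/-- Modified Bessel function of the second kind of order one,
`K₁(z) = ∫₀^∞ exp (−z cosh t) cosh t dt`. -/
noncomputable def besselK1 (z : ℝ) : ℝ :=
  ∫ t in Ioi (0 : ℝ), Real.exp (-z * Real.cosh t) * Real.cosh t

/-- Digamma function `ψ(x) = d/dx log Γ(x)`. -/
noncomputable def digamma (x : ℝ) : ℝ :=
  deriv (fun y : ℝ => Real.log (Real.Gamma y)) x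

/-- Conditional output density of the noncentral chi channel with four degrees of freedom. -/
noncomputable def condDensity (σN x y : ℝ) : ℝ :=
  (2 / σN ^ 2) * (y ^ 2 / x) * Real.exp (-(x ^ 2 + y ^ 2) / σN ^ 2) *
    besselI1 (2 * x * y / σN ^ 2)

/-- Rayleigh input density with mean-square `σS²`. -/
noncomputable def rayleighDensity (σS x : ℝ) : ℝ :=
  (2 * x / σS ^ 2) * Real.exp (-x ^ 2 / σS ^ 2)

/-- `F(ρ) = ∫₀^∞ ξ K₁(√(1+ρ⁻¹) ξ) I₁(ξ) log I₁(ξ) dξ`. -/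
noncomputable def Fint (ρ : ℝ) : ℝ :=
  ∫ ξ in Ioi (0 : ℝ),
    ξ * besselK1 (Real.sqrt (1 + ρ⁻¹) * ξ) * besselI1 ξ * Real.log (besselI1 ξ)

/-- Closed-form mutual information of Theorem 1. -/
noncomputable def Ixy (ρ : ℝ) : ℝ :=
  Real.log (ρ * Real.sqrt (1 + ρ⁻¹)) + ρ⁻¹ * Real.log (Real.sqrt (1 + ρ)) - ρ +
    ρ⁻¹ * Real.sqrt (1 + ρ⁻¹) * Fint ρ + digamma ρ⁻¹ - digamma 1 - 1

lemma hasDerivAt_Gamma_of_pos {x : ℝ} (hx : 0 < x) :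
    HasDerivAt Real.Gamma (digamma x * Real.Gamma x) x := by
  have hd : DifferentiableAt ℝ Real.Gamma x :=
    Real.differentiableAt_Gamma fun m => by
      have : (0 : ℝ) ≤ m := m.cast_nonneg
      linarith
  have hne := (Real.Gamma_pos_of_pos hx).ne'
  have hval : digamma x = deriv Real.Gamma x / Real.Gamma x := by
    simpa [digamma] using (hd.hasDerivAt.log hne).deriv
  rw [hval, div_mul_cancel₀ _ hne]
  exact hd.hasDerivAt

lemma digamma_add_one {x : ℝ} (hx : 0 < x) : digamma (x + 1) = digamma x + 1 / x := by
  have hG := (Real.Gamma_pos_of_pos hx).ne'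
  have h1 : HasDerivAt (fun y : ℝ => Real.Gamma (y + 1))
      (digamma (x + 1) * Real.Gamma (x + 1)) x :=
    (hasDerivAt_Gamma_of_pos (by linarith : 0 < x + 1)).comp_add_const x 1
  have h2 : HasDerivAt (fun y : ℝ => y * Real.Gamma y)
      (1 * Real.Gamma x + x * (digamma x * Real.Gamma x)) x :=
    (hasDerivAt_id x).mul (hasDerivAt_Gamma_of_pos hx)
  have h3 : (fun y : ℝ => Real.Gamma (y + 1)) =ᶠ[nhds x] fun y => y * Real.Gamma y := by
    filter_upwards [lt_mem_nhds hx] with y hy using Real.Gamma_add_one hy.ne'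
  have h4 := h1.unique (h2.congr_of_eventuallyEq h3)
  rw [Real.Gamma_add_one hx.ne'] at h4
  field_simp
  apply mul_right_cancel₀ hG
  linarith

lemma digamma_one : digamma 1 = -Real.eulerMascheroniConstant := by
  have h := (hasDerivAt_Gamma_of_pos one_pos).unique Real.hasDerivAt_Gamma_one
  simpa using h

/-- The logarithmic moment of the unit exponential distribution. -/
lemma integrableOn_exp_neg_mul_log_and_integral :
    IntegrableOn (fun t : ℝ => Real.exp (-t) * Real.log t) (Ioi 0) ∧
      ∫ t in Ioi (0 : ℝ), Real.exp (-t) * Real.log t = digamma 1 := by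
  have hcont : Continuous fun t : ℝ => ((Real.exp (-t) : ℝ) : ℂ) := by fun_prop
  have h := mellin_hasDerivAt_of_isBigO_rpow (E := ℂ) (a := 2) (b := 0) (s := 1)
    (f := fun t : ℝ => ((Real.exp (-t) : ℝ) : ℂ))
    (hcont.continuousOn.locallyIntegrableOn measurableSet_Ioi)
    (by
      rw [← Asymptotics.isBigO_norm_left]
      simp_rw [Complex.norm_real, Asymptotics.isBigO_norm_left]
      simpa only [neg_one_mul] using (isLittleO_exp_neg_mul_rpow_atTop zero_lt_one _).isBigO)
    (by norm_num)
    (by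
      simp_rw [neg_zero, rpow_zero]
      exact Asymptotics.isBigO_const_of_tendsto
        (hcont.continuousWithinAt (x := (0 : ℝ))).tendsto (by simp))
    (by norm_num)
  have hfun : ∀ t : ℝ, (t : ℂ) ^ ((1 : ℂ) - 1) • (Real.log t • ((Real.exp (-t) : ℝ) : ℂ)) =
      ((Real.exp (-t) * Real.log t : ℝ) : ℂ) := by
    intro t
    simp [mul_comm]
  obtain ⟨hint, hder⟩ := h
  simp only [MellinConvergent, hfun] at hint
  simp only [mellin, hfun] at hder
  rw [integral_complex_ofReal] at hder
  refine ⟨?_, ?_⟩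
  · exact hint.re
  · have hG : HasDerivAt Complex.Gamma
        ((∫ t in Ioi (0 : ℝ), Real.exp (-t) * Real.log t : ℝ) : ℂ) 1 := by
      refine hder.congr_of_eventuallyEq ?_
      have ho : IsOpen {s : ℂ | 0 < s.re} := Complex.continuous_re.isOpen_preimage _ isOpen_Ioi
      filter_upwards [ho.mem_nhds (show (1 : ℂ) ∈ {s : ℂ | 0 < s.re} by simp)] with s hs
      rw [Complex.Gamma_eq_integral hs, Complex.GammaIntegral_eq_mellin, mellin]
    have := hG.unique Complex.hasDerivAt_Gamma_one
    rw [digamma_one]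
    exact_mod_cast this

lemma integrableOn_exp_neg_mul {c : ℝ} (hc : 0 < c) :
    IntegrableOn (fun t : ℝ => Real.exp (-(c * t))) (Ioi 0) := by
  simpa using exp_neg_integrableOn_Ioi 0 hc

lemma integral_exp_neg_mul_Ioi {c : ℝ} (hc : 0 < c) :
    ∫ t in Ioi (0 : ℝ), Real.exp (-(c * t)) = 1 / c := by
  have h := integral_exp_mul_Ioi (neg_neg_of_pos hc) 0
  simpa using h

lemma integrableOn_exp_neg_mul_mul_log {c : ℝ} (hc : 0 < c) :
    IntegrableOn (fun t : ℝ => Real.exp (-(c * t)) * Real.log t) (Ioi 0) := by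
  have h := (integrableOn_Ioi_comp_mul_left_iff
    (fun t : ℝ => Real.exp (-t) * Real.log t) 0 hc).2
      (by simpa using integrableOn_exp_neg_mul_log_and_integral.1)
  refine (h.sub ((integrableOn_exp_neg_mul hc).mul_const (Real.log c))).congr_fun
    (fun t ht => ?_) measurableSet_Ioi
  simp only [Pi.sub_apply]
  rw [Real.log_mul hc.ne' (ne_of_gt ht)]
  ring

lemma integral_exp_neg_mul_mul_log {c : ℝ} (hc : 0 < c) :
    ∫ t in Ioi (0 : ℝ), Real.exp (-(c * t)) * Real.log t = (digamma 1 - Real.log c) / c := by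
  have h := integral_comp_mul_left_Ioi (fun t : ℝ => Real.exp (-t) * Real.log t) 0 hc
  rw [mul_zero, integrableOn_exp_neg_mul_log_and_integral.2] at h
  have h4 : ∫ t in Ioi (0 : ℝ), Real.exp (-(c * t)) * Real.log (c * t) =
      Real.log c * (1 / c) + ∫ t in Ioi (0 : ℝ), Real.exp (-(c * t)) * Real.log t := by
    rw [← integral_exp_neg_mul_Ioi hc, ← integral_const_mul,
      ← integral_add ((integrableOn_exp_neg_mul hc).const_mul _)
      (integrableOn_exp_neg_mul_mul_log hc)]
    refine setIntegral_congr_fun measurableSet_Ioi fun t ht => ?_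
    rw [Real.log_mul hc.ne' (ne_of_gt ht)]
    ring
  rw [h4] at h
  rw [smul_eq_mul] at h
  field_simp at h ⊢
  linarith

lemma integral_rpow_mul_one_sub_rpow {r s : ℝ} (hr : 0 < r) (hs : 0 < s) :
    ∫ u in Ioo (0 : ℝ) 1, u ^ (r - 1) * (1 - u) ^ (s - 1) =
      Real.Gamma r * Real.Gamma s / Real.Gamma (r + s) := by
  have h := Complex.betaIntegral_eq_Gamma_mul_div (r : ℂ) (s : ℂ) (by simpa) (by simpa)
  have hI : Complex.betaIntegral r s =
      ((∫ u in Ioo (0 : ℝ) 1, u ^ (r - 1) * (1 - u) ^ (s - 1) : ℝ) : ℂ) := by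
    rw [Complex.betaIntegral, intervalIntegral.integral_of_le zero_le_one,
      integral_Ioc_eq_integral_Ioo, ← integral_complex_ofReal]
    refine setIntegral_congr_fun measurableSet_Ioo fun u hu => ?_
    have h1 : (0 : ℝ) ≤ 1 - u := by linarith [hu.2]
    rw [Complex.ofReal_mul, Complex.ofReal_cpow hu.1.le, Complex.ofReal_cpow h1]
    push_cast
    rfl
  rw [hI, ← Complex.ofReal_add] at h
  simp only [Complex.Gamma_ofReal] at h
  exact_mod_cast h

lemma integrableOn_rpow_sub_one {r : ℝ} (hr : 0 < r) :
    IntegrableOn (fun u : ℝ => u ^ (r - 1)) (Ioo 0 1) :=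
  (intervalIntegral.integrableOn_Ioo_rpow_iff one_pos).2 (by linarith)

lemma norm_mul_rpow_mul_log_le {r s u : ℝ} (hs : 3 / 2 < s) (hu : u ∈ Ioo (0 : ℝ) 1) :
    ‖u ^ (r - 1) * ((1 - u) ^ (s - 1) * Real.log (1 - u))‖ ≤ u ^ (r - 1) * 2 := by
  have h1 : 0 < 1 - u := by linarith [hu.2]
  have hp : 0 ≤ u ^ (r - 1) := rpow_nonneg hu.1.le _
  rw [norm_mul, Real.norm_of_nonneg hp]
  refine mul_le_mul_of_nonneg_left ?_ hp
  have h2 := Real.abs_log_mul_self_rpow_lt (1 - u) (s - 1) h1 (by linarith [hu.1]) (by linarith)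
  rw [mul_comm, Real.norm_eq_abs]
  refine h2.le.trans ?_
  rw [div_le_iff₀ (by linarith)]
  linarith

/-- Differentiating the beta integral in its second parameter at `2`. -/
lemma integrableOn_and_hasDerivAt_beta {r : ℝ} (hr : 0 < r) :
    IntegrableOn (fun u : ℝ => u ^ (r - 1) * ((1 - u) ^ ((2 : ℝ) - 1) * Real.log (1 - u)))
        (Ioo 0 1) ∧
      HasDerivAt (fun s : ℝ => ∫ u in Ioo (0 : ℝ) 1, u ^ (r - 1) * (1 - u) ^ (s - 1))
        (∫ u in Ioo (0 : ℝ) 1, u ^ (r - 1) * ((1 - u) ^ ((2 : ℝ) - 1) * Real.log (1 - u))) 2 := by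
  refine hasDerivAt_integral_of_dominated_loc_of_deriv_le
    (F := fun (s u : ℝ) => u ^ (r - 1) * (1 - u) ^ (s - 1))
    (F' := fun (s u : ℝ) => u ^ (r - 1) * ((1 - u) ^ (s - 1) * Real.log (1 - u)))
    (bound := fun u => u ^ (r - 1) * 2) (s := Ioi (3 / 2)) (Ioi_mem_nhds (by norm_num))
    (Eventually.of_forall fun s => ?_) ?_ ?_ ?_ ((integrableOn_rpow_sub_one hr).mul_const 2) ?_
  · exact Measurable.aestronglyMeasurable (by fun_prop)
  · refine (integrableOn_rpow_sub_one hr).mono'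
      (Measurable.aestronglyMeasurable (by fun_prop)) ?_
    refine ae_restrict_of_forall_mem measurableSet_Ioo fun u hu => ?_
    have h1 : 0 ≤ 1 - u := by linarith [hu.2]
    have hp : 0 ≤ u ^ (r - 1) := rpow_nonneg hu.1.le _
    have hq : (0 : ℝ) ≤ (1 - u) ^ ((2 : ℝ) - 1) := rpow_nonneg h1 _
    rw [Real.norm_of_nonneg (mul_nonneg hp hq)]
    exact mul_le_of_le_one_right hp (rpow_le_one h1 (by linarith [hu.1]) (by norm_num))
  · exact Measurable.aestronglyMeasurable (by fun_prop)
  · exact ae_restrict_of_forall_mem measurableSet_Ioo fun u hu s hs =>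
      norm_mul_rpow_mul_log_le hs hu
  · refine ae_restrict_of_forall_mem measurableSet_Ioo fun u hu s _ => ?_
    have h1 : 0 < 1 - u := by linarith [hu.2]
    have := (((hasDerivAt_id s).sub_const 1).const_rpow h1).const_mul (u ^ (r - 1))
    refine this.congr_deriv ?_
    rw [id_eq]
    ring

lemma integral_rpow_mul_one_sub_mul_log {r : ℝ} (hr : 0 < r) :
    ∫ u in Ioo (0 : ℝ) 1, u ^ (r - 1) * ((1 - u) ^ ((2 : ℝ) - 1) * Real.log (1 - u)) =
      (digamma 1 + 1 - digamma r - 1 / r - 1 / (r + 1)) / (r * (r + 1)) := by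
  have hG : 0 < Real.Gamma r := Real.Gamma_pos_of_pos hr
  have hGr : Real.Gamma (r + 2) = (r + 1) * (r * Real.Gamma r) := by
    rw [show r + 2 = r + 1 + 1 by ring, Real.Gamma_add_one (by positivity),
      Real.Gamma_add_one hr.ne']
  have hψ2 : digamma 2 = digamma 1 + 1 := by
    have := digamma_add_one one_pos
    norm_num at this
    exact this
  have hψr : digamma (r + 2) = digamma r + 1 / r + 1 / (r + 1) := by
    rw [show r + 2 = r + 1 + 1 by ring, digamma_add_one (by positivity), digamma_add_one hr]
  have h1 := (hasDerivAt_Gamma_of_pos (two_pos : (0 : ℝ) < 2)).const_mul (Real.Gamma r)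
  have h2 : HasDerivAt (fun s : ℝ => Real.Gamma (r + s))
      (digamma (r + 2) * Real.Gamma (r + 2)) 2 :=
    (hasDerivAt_Gamma_of_pos (by positivity : 0 < r + 2)).comp_const_add r 2
  have h3 := h1.div h2 (Real.Gamma_pos_of_pos (by positivity)).ne'
  have h4 := (integrableOn_and_hasDerivAt_beta hr).2.unique (h3.congr_of_eventuallyEq (by
    filter_upwards [lt_mem_nhds (two_pos : (0 : ℝ) < 2)] with s hs
    exact integral_rpow_mul_one_sub_rpow hr hs))
  rw [h4, hψr, hψ2, hGr, Real.Gamma_two]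
  field_simp
  ring

lemma image_exp_neg_mul_Ioi {d : ℝ} (hd : 0 < d) :
    (fun t : ℝ => Real.exp (-(d * t))) '' Ioi 0 = Ioo 0 1 := by
  ext u
  simp only [mem_image, mem_Ioi, mem_Ioo]
  constructor
  · rintro ⟨t, ht, rfl⟩
    exact ⟨Real.exp_pos _, Real.exp_lt_one_iff.2 (neg_lt_zero.2 (mul_pos hd ht))⟩
  · rintro ⟨h0, h1⟩
    refine ⟨-Real.log u / d, div_pos (by linarith [Real.log_neg h0 h1]) hd, ?_⟩
    rw [mul_div_cancel₀ _ hd.ne', neg_neg, Real.exp_log h0]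

lemma hasDerivWithinAt_exp_neg_mul (d t : ℝ) (S : Set ℝ) :
    HasDerivWithinAt (fun t : ℝ => Real.exp (-(d * t))) (-(d * Real.exp (-(d * t)))) S t := by
  have h : HasDerivAt (fun t : ℝ => -(d * t)) (-(d * 1)) t := ((hasDerivAt_id t).const_mul d).neg
  refine (h.exp.congr_deriv ?_).hasDerivWithinAt
  ring

lemma injOn_exp_neg_mul {d : ℝ} (hd : 0 < d) (S : Set ℝ) :
    InjOn (fun t : ℝ => Real.exp (-(d * t))) S := fun _ _ _ _ h =>
  mul_left_cancel₀ hd.ne' (neg_injective (Real.exp_injective h))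

lemma abs_deriv_smul_rpow_mul_log {r d : ℝ} (hd : 0 < d) (t : ℝ) :
    |-(d * Real.exp (-(d * t)))| • ((Real.exp (-(d * t))) ^ (r - 1) *
        ((1 - Real.exp (-(d * t))) ^ ((2 : ℝ) - 1) * Real.log (1 - Real.exp (-(d * t))))) =
      d * ((Real.exp (-(r * d * t)) - Real.exp (-((r + 1) * d * t))) *
        Real.log (1 - Real.exp (-(d * t)))) := by
  have h1 : (2 : ℝ) - 1 = 1 := by norm_num
  have h2 : Real.exp (-(r * d * t)) =
      Real.exp (-(d * t)) * Real.exp (-(d * t)) ^ (r - 1) := by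
    rw [← Real.exp_mul, ← Real.exp_add]
    ring_nf
  have h3 : Real.exp (-((r + 1) * d * t)) = Real.exp (-(r * d * t)) * Real.exp (-(d * t)) := by
    rw [← Real.exp_add]
    ring_nf
  rw [abs_neg, abs_of_pos (by positivity), h1, rpow_one, h3, h2, smul_eq_mul]
  ring

lemma integrableOn_exp_sub_exp_mul_log {r d : ℝ} (hr : 0 < r) (hd : 0 < d) :
    IntegrableOn (fun t : ℝ => (Real.exp (-(r * d * t)) - Real.exp (-((r + 1) * d * t))) *
      Real.log (1 - Real.exp (-(d * t)))) (Ioi 0) := by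
  have h := (integrableOn_and_hasDerivAt_beta hr).1
  rw [← image_exp_neg_mul_Ioi hd, integrableOn_image_iff_integrableOn_abs_deriv_smul
    measurableSet_Ioi (fun t _ => hasDerivWithinAt_exp_neg_mul d t _) (injOn_exp_neg_mul hd _)] at h
  simp only [abs_deriv_smul_rpow_mul_log hd] at h
  refine IntegrableOn.congr_fun (h.const_mul d⁻¹) (fun t _ => ?_) measurableSet_Ioi
  exact inv_mul_cancel_left₀ hd.ne' _

lemma integral_exp_sub_exp_mul_log {r d : ℝ} (hr : 0 < r) (hd : 0 < d) :
    ∫ t in Ioi (0 : ℝ), (Real.exp (-(r * d * t)) - Real.exp (-((r + 1) * d * t))) *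
        Real.log (1 - Real.exp (-(d * t))) =
      (digamma 1 + 1 - digamma r - 1 / r - 1 / (r + 1)) / (d * (r * (r + 1))) := by
  have h := integral_rpow_mul_one_sub_mul_log hr
  rw [← image_exp_neg_mul_Ioi hd, integral_image_eq_integral_abs_deriv_smul
    measurableSet_Ioi (fun t _ => hasDerivWithinAt_exp_neg_mul d t _) (injOn_exp_neg_mul hd _)] at h
  simp only [abs_deriv_smul_rpow_mul_log hd] at h
  rw [integral_const_mul] at h
  rw [mul_comm d (r * (r + 1)), ← div_div, ← h, mul_div_cancel_left₀ _ hd.ne']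

lemma integrableOn_pow_mul_exp_neg_mul_sq {m : ℝ} (hm : 0 < m) (k : ℕ) :
    IntegrableOn (fun x : ℝ => x ^ (2 * k + 1) * Real.exp (-(m * x ^ 2))) (Ioi 0) := by
  have h := integrableOn_rpow_mul_exp_neg_mul_rpow (p := 2) (s := ((2 * k + 1 : ℕ) : ℝ)) (b := m)
    (lt_of_lt_of_le (by norm_num) (Nat.cast_nonneg _)) two_pos hm
  refine h.congr_fun (fun x _ => ?_) measurableSet_Ioi
  simp only [rpow_natCast, rpow_ofNat, neg_mul]

lemma integral_pow_mul_exp_neg_mul_sq {m : ℝ} (hm : 0 < m) (k : ℕ) :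
    ∫ x in Ioi (0 : ℝ), x ^ (2 * k + 1) * Real.exp (-(m * x ^ 2)) =
      (k.factorial : ℝ) / (2 * m ^ (k + 1)) := by
  have h := integral_rpow_mul_exp_neg_mul_rpow (p := 2) (q := ((2 * k + 1 : ℕ) : ℝ)) (b := m)
    two_pos (lt_of_lt_of_le (by norm_num) (Nat.cast_nonneg _)) hm
  simp only [rpow_natCast, rpow_ofNat, neg_mul] at h
  have h1 : (((2 * k + 1 : ℕ) : ℝ) + 1) / 2 = (k : ℝ) + 1 := by push_cast; ring
  have h2 : -(((2 * k + 1 : ℕ) : ℝ) + 1) / 2 = -((k + 1 : ℕ) : ℝ) := by push_cast; ring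
  rw [h, h1, h2, Real.Gamma_nat_eq_factorial, rpow_neg hm.le, rpow_natCast]
  field_simp

/-- The Gaussian-weighted integral of `I₁`. -/
lemma integral_exp_neg_mul_sq_mul_besselI1 {m z : ℝ} (hm : 0 < m) (hz : 0 < z) :
    ∫ x in Ioi (0 : ℝ), Real.exp (-(m * x ^ 2)) * besselI1 (2 * z * x) =
      (Real.exp (z ^ 2 / m) - 1) / (2 * z) := by
  let F : ℕ → ℝ → ℝ := fun k x => z ^ (2 * k + 1) /
    ((Nat.factorial k : ℝ) * (Nat.factorial (k + 1) : ℝ)) *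
      (x ^ (2 * k + 1) * Real.exp (-(m * x ^ 2)))
  have hFint : ∀ k, ∫ x in Ioi (0 : ℝ), F k x =
      (z ^ 2 / m) ^ (k + 1) / ((k + 1).factorial : ℝ) / (2 * z) := by
    intro k
    have hk : (k.factorial : ℝ) ≠ 0 := Nat.cast_ne_zero.2 k.factorial_ne_zero
    have hk' : ((k + 1).factorial : ℝ) ≠ 0 := Nat.cast_ne_zero.2 (k + 1).factorial_ne_zero
    simp only [F]
    rw [integral_const_mul, integral_pow_mul_exp_neg_mul_sq hm, div_pow]
    field_simp
    ring
  have hexp : HasSum (fun k : ℕ => (z ^ 2 / m) ^ (k + 1) / ((k + 1).factorial : ℝ))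
      (Real.exp (z ^ 2 / m) - 1) := by
    have h := NormedSpace.expSeries_div_hasSum_exp (z ^ 2 / m)
    rw [← Real.exp_eq_exp_ℝ] at h
    simpa using (hasSum_nat_add_iff' 1).2 h
  have hsum := hexp.div_const (2 * z)
  have hnorm : ∀ k, ∫ x in Ioi (0 : ℝ), ‖F k x‖ = ∫ x in Ioi (0 : ℝ), F k x := by
    intro k
    refine setIntegral_congr_fun measurableSet_Ioi fun x hx => ?_
    have hx' : (0 : ℝ) < x := hx
    exact Real.norm_of_nonneg (by positivity)
  have h := hasSum_integral_of_summable_integral_norm (μ := volume.restrict (Ioi 0)) (F := F)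
    (fun k => (integrableOn_pow_mul_exp_neg_mul_sq hm k).const_mul _)
    (by simpa only [hnorm, hFint] using hsum.summable)
  simp only [hFint] at h
  rw [hsum.unique h]
  refine setIntegral_congr_fun measurableSet_Ioi fun x _ => ?_
  simp only [besselI1, F]
  rw [← tsum_mul_left]
  refine tsum_congr fun k => ?_
  rw [show 2 * z * x / 2 = z * x by ring, mul_pow]
  ring

lemma integral_condDensity_mul_rayleighDensity {σN σS a b c y : ℝ} (hσN : 0 < σN) (hσS : 0 < σS)
    (ha : a = 1 / σN ^ 2) (hb : b = 1 / σS ^ 2) (hc : c = a * b / (a + b)) (hy : 0 < y) :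
    ∫ x in Ioi (0 : ℝ), condDensity σN x y * rayleighDensity σS x =
      2 * b * y * (Real.exp (-(c * y ^ 2)) - Real.exp (-(a * y ^ 2))) := by
  have ha0 : 0 < a := by rw [ha]; positivity
  have hb0 : 0 < b := by rw [hb]; positivity
  have h := integral_exp_neg_mul_sq_mul_besselI1 (add_pos ha0 hb0) (mul_pos ha0 hy)
  have h1 : ∫ x in Ioi (0 : ℝ), condDensity σN x y * rayleighDensity σS x =
      ∫ x in Ioi (0 : ℝ), 4 * a * b * y ^ 2 * Real.exp (-(a * y ^ 2)) *
        (Real.exp (-((a + b) * x ^ 2)) * besselI1 (2 * (a * y) * x)) := by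
    refine setIntegral_congr_fun measurableSet_Ioi fun x hx => ?_
    have hx' : x ≠ 0 := ne_of_gt hx
    have e1 : Real.exp (-(x ^ 2 + y ^ 2) / σN ^ 2) =
        Real.exp (-(a * y ^ 2)) * Real.exp (-(a * x ^ 2)) := by
      rw [← Real.exp_add, ha]
      ring_nf
    have e2 : Real.exp (-((a + b) * x ^ 2)) =
        Real.exp (-(a * x ^ 2)) * Real.exp (-x ^ 2 / σS ^ 2) := by
      rw [← Real.exp_add, hb]
      ring_nf
    have e3 : 2 * x * y / σN ^ 2 = 2 * (a * y) * x := by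
      rw [ha]
      ring
    have e4 : 2 / σN ^ 2 = 2 * a := by
      rw [ha]
      ring
    have e5 : 2 * x / σS ^ 2 = 2 * b * x := by
      rw [hb]
      ring
    simp only [condDensity, rayleighDensity]
    rw [e1, e2, e3, e4, e5]
    field_simp
    ring
  have h2 : Real.exp (-(c * y ^ 2)) =
      Real.exp (-(a * y ^ 2)) * Real.exp ((a * y) ^ 2 / (a + b)) := by
    rw [← Real.exp_add, hc]
    congr 1
    field_simp
    ring
  rw [h1, integral_const_mul, h, h2]
  field_simp
  ring

lemma integrableOn_mul_exp_neg_mul {c : ℝ} (hc : 0 < c) :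
    IntegrableOn (fun t : ℝ => t * Real.exp (-(c * t))) (Ioi 0) := by
  have h := integrableOn_rpow_mul_exp_neg_mul_rpow (p := 1) (s := 1) (b := c)
    (by norm_num) one_pos hc
  simpa only [rpow_one, neg_mul] using h

lemma integral_mul_exp_neg_mul {c : ℝ} (hc : 0 < c) :
    ∫ t in Ioi (0 : ℝ), t * Real.exp (-(c * t)) = 1 / c ^ 2 := by
  have h := integral_rpow_mul_exp_neg_mul_rpow (p := 1) (q := 1) (b := c)
    one_pos (by norm_num) hc
  simp only [rpow_one, neg_mul] at h
  rw [h, show ((1 : ℝ) + 1) / 1 = 2 by norm_num, Real.Gamma_two,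
    show -((1 : ℝ) + 1) / 1 = -2 by norm_num, rpow_neg hc.le, rpow_two]
  ring

/-- The log-likelihood integral of the squared output, whose density is
`b (exp (-r d t) - exp (-(r + 1) d t))`. -/
lemma integral_exp_sub_exp_mul_logDensity {r d : ℝ} (hr : 0 < r) (hd : 0 < d) (L : ℝ) :
    ∫ t in Ioi (0 : ℝ), (Real.exp (-(r * d * t)) - Real.exp (-((r + 1) * d * t))) *
        (L + 1 / 2 * Real.log t - r * d * t + Real.log (1 - Real.exp (-(d * t)))) =
      L * (1 / (r * d) - 1 / ((r + 1) * d)) +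
        1 / 2 * ((digamma 1 - Real.log (r * d)) / (r * d) -
          (digamma 1 - Real.log ((r + 1) * d)) / ((r + 1) * d)) -
        r * d * (1 / (r * d) ^ 2 - 1 / ((r + 1) * d) ^ 2) +
        (digamma 1 + 1 - digamma r - 1 / r - 1 / (r + 1)) / (d * (r * (r + 1))) := by
  have hc : 0 < r * d := by positivity
  have ha : 0 < (r + 1) * d := by positivity
  have i1 := ((integrableOn_exp_neg_mul hc).sub (integrableOn_exp_neg_mul ha)).const_mul L
  have i2 := ((integrableOn_exp_neg_mul_mul_log hc).sub
    (integrableOn_exp_neg_mul_mul_log ha)).const_mul (1 / 2)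
  have i3 := ((integrableOn_mul_exp_neg_mul hc).sub
    (integrableOn_mul_exp_neg_mul ha)).const_mul (r * d)
  simp only [Pi.sub_apply] at i1 i2 i3
  have i123 := (i1.fun_add i2).sub i3
  simp only [Pi.sub_def] at i123
  have i4 := integrableOn_exp_sub_exp_mul_log hr hd
  rw [← integral_exp_sub_exp_mul_log hr hd, ← integral_mul_exp_neg_mul hc,
    ← integral_mul_exp_neg_mul ha, ← integral_exp_neg_mul_mul_log hc,
    ← integral_exp_neg_mul_mul_log ha, ← integral_exp_neg_mul_Ioi hc,
    ← integral_exp_neg_mul_Ioi ha,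
    ← integral_sub (integrableOn_exp_neg_mul hc) (integrableOn_exp_neg_mul ha),
    ← integral_sub (integrableOn_exp_neg_mul_mul_log hc) (integrableOn_exp_neg_mul_mul_log ha),
    ← integral_sub (integrableOn_mul_exp_neg_mul hc) (integrableOn_mul_exp_neg_mul ha),
    ← integral_const_mul, ← integral_const_mul, ← integral_const_mul,
    ← integral_add i1 i2, ← integral_sub (i1.fun_add i2) i3,
    ← integral_add i123 i4]
  refine setIntegral_congr_fun measurableSet_Ioi fun t _ => ?_
  ring

lemma log_mul_exp_sub_exp {b c d y : ℝ} (hb : 0 < b) (hd : 0 < d) (hy : 0 < y) :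
    Real.log (2 * b * y * (Real.exp (-(c * y ^ 2)) - Real.exp (-((c + d) * y ^ 2)))) =
      Real.log (2 * b) + 1 / 2 * Real.log (y ^ 2) - c * y ^ 2 +
        Real.log (1 - Real.exp (-(d * y ^ 2))) := by
  have h1 : Real.exp (-(c * y ^ 2)) - Real.exp (-((c + d) * y ^ 2)) =
      Real.exp (-(c * y ^ 2)) * (1 - Real.exp (-(d * y ^ 2))) := by
    rw [mul_sub, mul_one, ← Real.exp_add]
    ring_nf
  have h2 : 0 < 1 - Real.exp (-(d * y ^ 2)) :=
    sub_pos.2 (Real.exp_lt_one_iff.2 (neg_lt_zero.2 (by positivity)))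
  rw [h1, Real.log_mul (by positivity) (by positivity), Real.log_mul (by positivity) hy.ne',
    Real.log_mul (Real.exp_pos _).ne' h2.ne', Real.log_exp, Real.log_pow]
  push_cast
  ring

/-- Lemma 1: closed form for the output differential entropy
h_Y = −∫₀^∞ p_Y log p_Y with Rayleigh input. -/
theorem stmt_3 (σN σS ρ : ℝ) (hσN : 0 < σN) (hσS : 0 < σS) (hρ : ρ = σS ^ 2 / σN ^ 2)
    (pY : ℝ → ℝ)
    (hpY : ∀ y : ℝ, pY y = ∫ x in Ioi (0 : ℝ), condDensity σN x y * rayleighDensity σS x) :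
    -∫ y in Ioi (0 : ℝ), pY y * Real.log (pY y) =
      Real.log (Real.sqrt (σS ^ 2)) - Real.log (Real.sqrt (1 + ρ⁻¹)) -
        ρ⁻¹ * Real.log (Real.sqrt (1 + ρ)) + ρ + digamma ρ⁻¹ - (3 / 2) * digamma 1 -
        Real.log 2 + 1 := by
  have hρ0 : 0 < ρ := by rw [hρ]; positivity
  obtain ⟨b, hb⟩ : ∃ b, b = 1 / σS ^ 2 := ⟨_, rfl⟩
  obtain ⟨r, hr⟩ : ∃ r, r = ρ⁻¹ := ⟨_, rfl⟩
  obtain ⟨d, hd⟩ : ∃ d, d = b / (r * (r + 1)) := ⟨_, rfl⟩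
  have hb0 : 0 < b := by rw [hb]; positivity
  have hr0 : 0 < r := by rw [hr]; positivity
  have hd0 : 0 < d := by rw [hd]; positivity
  have ha : (r + 1) * d = 1 / σN ^ 2 := by
    rw [hd, hb, hr, hρ]
    field_simp
  have hbd : b = r * (r + 1) * d := by
    rw [hd]
    field_simp
  have hc : r * d = (r + 1) * d * b / ((r + 1) * d + b) := by
    rw [hbd]
    field_simp
    ring
  let G : ℝ → ℝ := fun t => b * ((Real.exp (-(r * d * t)) - Real.exp (-((r + 1) * d * t))) *
    (Real.log (2 * b) + 1 / 2 * Real.log t - r * d * t + Real.log (1 - Real.exp (-(d * t)))))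
  have hint : ∫ y in Ioi (0 : ℝ), pY y * Real.log (pY y) = ∫ t in Ioi (0 : ℝ), G t := by
    rw [← integral_comp_rpow_Ioi_of_pos (g := G) two_pos]
    refine setIntegral_congr_fun measurableSet_Ioi fun y hy => ?_
    have hy' : (0 : ℝ) < y := hy
    have hp := integral_condDensity_mul_rayleighDensity hσN hσS ha hb hc hy'
    have hl := log_mul_exp_sub_exp (c := r * d) hb0 hd0 hy'
    rw [show r * d + d = (r + 1) * d by ring] at hl
    rw [hpY, hp, hl, show (2 : ℝ) - 1 = 1 by norm_num, rpow_one, rpow_two, smul_eq_mul]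
    simp only [G]
    ring
  have hlogS : Real.log (Real.sqrt (σS ^ 2)) = -(1 / 2) * Real.log b := by
    rw [Real.log_sqrt (by positivity), hb, Real.log_div one_ne_zero (by positivity), Real.log_one]
    ring
  have hρr : ρ = r⁻¹ := by rw [hr, inv_inv]
  have hlog1 : Real.log (1 + r⁻¹) = Real.log (r + 1) - Real.log r := by
    rw [← Real.log_div (by positivity) hr0.ne']
    congr 1
    field_simp
  have hlogd : Real.log d = Real.log b - Real.log r - Real.log (r + 1) := by
    rw [hd, Real.log_div hb0.ne' (by positivity), Real.log_mul hr0.ne' (by positivity)]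
    ring
  rw [hint]
  simp only [G]
  rw [integral_const_mul, integral_exp_sub_exp_mul_logDensity hr0 hd0, hlogS, ← hr,
    Real.log_sqrt (by positivity), Real.log_sqrt (by positivity), hρr, hlog1,
    Real.log_mul two_ne_zero hb0.ne', Real.log_mul hr0.ne' hd0.ne',
    Real.log_mul (by positivity) hd0.ne', hlogd, add_comm 1 r]
  generalize Real.log b = lb
  rw [hbd]
  field_simp
  ring
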